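/- arXiv:2312.02794 — 2 statements merged into one kernel-verified Lean document; each statement's English description precedes it below -/
import Mathlib

section
/- The Riemannian metric ds²_{n,m;A,B} = A·Tr(Y⁻¹dY Y⁻¹dY) + B·Tr(Y⁻¹ ᵗ(dV) dV) on 𝒫_{n,m} is invariant under the GL_{n,m}(ℝ)-action: for every g ∈ GL(n,ℝ), Y ∈ 𝒫_n, every symmetric real n×n matrix H, and every K ∈ ℝ^{m×n}, one has A·Tr((gYᵗg)⁻¹ (gHᵗg) (gYᵗg)⁻¹ (gHᵗg)) + B·Tr((gYᵗg)⁻¹ ᵗ(Kᵗg) (Kᵗg)) = A·Tr(Y⁻¹ H Y⁻¹ H) + B·Tr(Y⁻¹ ᵗK K), where A, B are arbitrary positive real constants. -/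
open Matrix

/-!
A simultaneous congruence `Y ↦ g * Y * gᵀ`, `H ↦ g * H * gᵀ` turns `Y⁻¹ * H` into its conjugate
`gᵀ⁻¹ * (Y⁻¹ * H) * gᵀ`, so traces of products of such matrices are unchanged. The Euclidean
directions enter the metric only through `Kᵀ * L`, and `K ↦ K * gᵀ`, `L ↦ L * gᵀ` acts on this
matrix by the same congruence; hence one computation covers both terms.
-/

section MinkowskiEuclid

variable {m n R : Type*} [Fintype n] [DecidableEq n] [CommRing R]

/-- The differential of the action of `(g, λ)` on the Minkowski–Euclid space, as a map of tangent
vectors `(H, K)`. It depends neither on `λ` nor on the base point. The symmetry of `H` is not built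
into the type, and the scalars range over a commutative ring. -/
def tangentAction (g : GL n R) (X : Matrix n n R × Matrix m n R) :
    Matrix n n R × Matrix m n R :=
  (g.val * X.1 * g.valᵀ, X.2 * g.valᵀ)

/-- The metric tensor of the Minkowski–Euclid space at a point with first component `Y`, as a
bilinear form on tangent vectors `(H, K)`; `ds²_{n,m;A,B}` is its value on the diagonal.
The tensor does not depend on the second component `V` of the point, which is therefore omitted. -/
noncomputable def minkowskiEuclidMetric [Fintype m] (A B : R) (Y : Matrix n n R)
    (X X' : Matrix n n R × Matrix m n R) : R :=
  A * (Y⁻¹ * X.1 * Y⁻¹ * X'.1).trace + B * (Y⁻¹ * X.2ᵀ * X'.2).trace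

theorem inv_sandwich_mul_sandwich {P : Matrix n n R} (hP : IsUnit P) (Q Y H : Matrix n n R) :
    (P * Y * Q)⁻¹ * (P * H * Q) = Q⁻¹ * (Y⁻¹ * H) * Q := by
  have hP' : IsUnit P.det := P.isUnit_iff_isUnit_det.mp hP
  simp only [Matrix.mul_inv_rev, Matrix.mul_assoc, nonsing_inv_mul_cancel_left _ _ hP']

theorem trace_inv_sandwich_mul_sandwich {P Q : Matrix n n R} (hP : IsUnit P) (hQ : IsUnit Q)
    (Y H : Matrix n n R) :
    ((P * Y * Q)⁻¹ * (P * H * Q)).trace = (Y⁻¹ * H).trace := by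
  rw [inv_sandwich_mul_sandwich hP, trace_conj' hQ]

theorem trace_inv_sandwich_mul_sandwich_mul {P Q : Matrix n n R} (hP : IsUnit P)
    (hQ : IsUnit Q) (Y H H' : Matrix n n R) :
    ((P * Y * Q)⁻¹ * (P * H * Q) * (P * Y * Q)⁻¹ * (P * H' * Q)).trace =
      (Y⁻¹ * H * Y⁻¹ * H').trace := by
  have hQ' : IsUnit Q.det := Q.isUnit_iff_isUnit_det.mp hQ
  calc ((P * Y * Q)⁻¹ * (P * H * Q) * (P * Y * Q)⁻¹ * (P * H' * Q)).trace
    _ = (Q⁻¹ * (Y⁻¹ * H) * Q * (Q⁻¹ * (Y⁻¹ * H') * Q)).trace := by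
      rw [Matrix.mul_assoc, inv_sandwich_mul_sandwich hP, inv_sandwich_mul_sandwich hP]
    _ = (Q⁻¹ * (Y⁻¹ * H * Y⁻¹ * H') * Q).trace := by
      simp only [Matrix.mul_assoc, mul_nonsing_inv_cancel_left _ _ hQ']
    _ = (Y⁻¹ * H * Y⁻¹ * H').trace := trace_conj' hQ _

theorem metric_invariance_general [Fintype m] (A B : R) (g Y : GL n R)
    (X X' : Matrix n n R × Matrix m n R) :
    minkowskiEuclidMetric A B (g.val * Y.val * g.valᵀ) (tangentAction g X) (tangentAction g X') =
      minkowskiEuclidMetric A B Y.val X X' := by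
  have hgT : IsUnit g.valᵀ := g.val.isUnit_transpose.mpr g.isUnit
  have euclidean_congruence : (X.2 * g.valᵀ)ᵀ * (X'.2 * g.valᵀ) =
      g.val * (X.2ᵀ * X'.2) * g.valᵀ := by
    simp only [transpose_mul, transpose_transpose, Matrix.mul_assoc]
  simp only [minkowskiEuclidMetric, tangentAction]
  rw [trace_inv_sandwich_mul_sandwich_mul g.isUnit hgT, Matrix.mul_assoc _ _ (X'.2 * _),
    euclidean_congruence, trace_inv_sandwich_mul_sandwich g.isUnit hgT, ← Matrix.mul_assoc]

end MinkowskiEuclid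

/-- Invariance of the Riemannian metric
`ds²_{n,m;A,B} = A·Tr(Y⁻¹dY Y⁻¹dY) + B·Tr(Y⁻¹ ᵗ(dV) dV)` on `𝒫_{n,m}` under the
`GL_{n,m}(ℝ)`-action: a tangent vector `(H,K)` at `(Y,V)` is moved to `(gHᵗg, Kᵗg)` at
`(gYᵗg, (V+λ)ᵗg)`, and the metric takes the same value. -/
theorem metric_invariance (n m : ℕ) (A B : ℝ) (hA : 0 < A) (hB : 0 < B)
    (g : GL (Fin n) ℝ) (Y : Matrix (Fin n) (Fin n) ℝ) (hY : Y.PosDef)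
    (H : Matrix (Fin n) (Fin n) ℝ) (hH : Hᵀ = H) (K : Matrix (Fin m) (Fin n) ℝ) :
    A * (((↑g : Matrix (Fin n) (Fin n) ℝ) * Y * (↑g : Matrix (Fin n) (Fin n) ℝ)ᵀ)⁻¹ *
          ((↑g : Matrix (Fin n) (Fin n) ℝ) * H * (↑g : Matrix (Fin n) (Fin n) ℝ)ᵀ) *
          ((↑g : Matrix (Fin n) (Fin n) ℝ) * Y * (↑g : Matrix (Fin n) (Fin n) ℝ)ᵀ)⁻¹ *
          ((↑g : Matrix (Fin n) (Fin n) ℝ) * H * (↑g : Matrix (Fin n) (Fin n) ℝ)ᵀ)).trace +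
      B * (((↑g : Matrix (Fin n) (Fin n) ℝ) * Y * (↑g : Matrix (Fin n) (Fin n) ℝ)ᵀ)⁻¹ *
          (K * (↑g : Matrix (Fin n) (Fin n) ℝ)ᵀ)ᵀ *
          (K * (↑g : Matrix (Fin n) (Fin n) ℝ)ᵀ)).trace =
    A * (Y⁻¹ * H * Y⁻¹ * H).trace + B * (Y⁻¹ * Kᵀ * K).trace := by
  obtain ⟨Y, rfl⟩ := hY.isUnit
  exact metric_invariance_general A B g Y (H, K) (H, K)
end

section
/- Minkowski reduction theory (property R1): for every Y ∈ 𝒫_n there exist A ∈ GL(n,ℤ) and a Minkowski-reduced matrix R ∈ ℜ_n such that Y = ᵗA R A; equivalently, for every Y ∈ 𝒫_n there exists A ∈ GL(n,ℤ) such that ᵗA Y A ∈ ℜ_n. -/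
open Matrix

/-- `Y` lies in the Minkowski fundamental domain `ℜ_n`: `Y` is symmetric positive definite,
(M.1) `a Y ᵗa ≥ y_{kk}` for every integer row vector `a` with `gcd(a_k,…,a_n) = 1`, and
(M.2) `y_{k,k+1} ≥ 0` for `k = 1,…,n−1`. -/
def MinkowskiReduced {n : ℕ} (Y : Matrix (Fin n) (Fin n) ℝ) : Prop :=
  Y.PosDef ∧
  (∀ (k : Fin n) (a : Fin n → ℤ), Finset.gcd (Finset.Ici k) a = 1 →
    Y k k ≤ (fun i => (a i : ℝ)) ⬝ᵥ Y.mulVec (fun i => (a i : ℝ))) ∧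
  (∀ (k : Fin n) (h : (k : ℕ) + 1 < n), 0 ≤ Y k ⟨(k : ℕ) + 1, h⟩)

/-!
Choose `U ∈ GL(n,ℤ)` for which the values of the form `Y` on the columns of `U` are
lexicographically minimal; the minimum exists because a positive definite form takes only finitely
many values below any bound on `ℤⁿ`. If `a` is primitive on the coordinates `≥ k`, then `U a` can
replace the `k`-th column of `U` without changing the earlier ones, so minimality gives (M.1) for
`ᵗU Y U`. The choice `a = -e_k` preserves the first `k` values and changes the sign of the entry at
`(k - 1, k)`; recording that sign as a tie-break in the minimisation therefore gives (M.2) as well.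
-/

section ColumnCompletion

variable {ι R : Type*}

/-- The entries of `a` indexed by `S` have no common divisor other than units. -/
def IsPrimitiveOn [Monoid R] (S : Set ι) (a : ι → R) : Prop :=
  ∀ d, (∀ i ∈ S, d ∣ a i) → IsUnit d

theorem isPrimitiveOn_of_gcd_eq_one [CommMonoidWithZero R] [NormalizedGCDMonoid R]
    {S : Finset ι} {a : ι → R} (h : S.gcd a = 1) : IsPrimitiveOn (S : Set ι) a :=
  fun _ hd => isUnit_of_dvd_one (h ▸ Finset.dvd_gcd hd)

theorem IsPrimitiveOn.exists_ne_zero [MonoidWithZero R] [Nontrivial R] {S : Set ι} {a : ι → R}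
    (h : IsPrimitiveOn S a) : ∃ i ∈ S, a i ≠ 0 := by
  by_contra! hzero
  exact not_isUnit_zero (h 0 fun i hi => (hzero i hi).symm ▸ dvd_rfl)

theorem IsPrimitiveOn.update_add_mul [CommRing R] [DecidableEq ι] {S : Set ι} {a : ι → R}
    (h : IsPrimitiveOn S a) {i j : ι} (hi : i ∈ S) (hij : i ≠ j) (q : R) :
    IsPrimitiveOn S (Function.update a j (a j + q * a i)) := by
  refine fun d hd => h d fun l hl => ?_
  have hdi : d ∣ a i := by simpa [hij] using hd i hi
  rcases eq_or_ne l j with rfl | hlj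
  · exact (dvd_add_left (hdi.mul_left q)).1 (by simpa using hd l hl)
  · simpa [hlj] using hd l hl

variable [Fintype ι] [DecidableEq ι]

/-- `a` is the `k`-th column of an invertible matrix whose columns outside `S` are those of the
identity matrix. -/
def IsCompletableColumn [CommRing R] (S : Set ι) (k : ι) (a : ι → R) : Prop :=
  ∃ U : GL ι R, (∀ l ∉ S, U.1 *ᵥ Pi.single l 1 = Pi.single l 1) ∧ U.1 *ᵥ Pi.single k 1 = a

theorem isCompletableColumn_of_isUnit_apply [CommRing R] {S : Set ι} {k : ι} {a : ι → R}
    (hk : k ∈ S) (h : IsUnit (a k)) : IsCompletableColumn S k a := by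
  have det_eq : ((1 : Matrix ι ι R).updateCol k a).det = a k := by
    rw [← cramer_apply, cramer_one, Module.End.one_apply]
  refine ⟨GeneralLinearGroup.mk'' _ (det_eq ▸ h), fun l hl => ?_, ?_⟩
  · have hlk : l ≠ k := fun hlk => hl (hlk ▸ hk)
    change (1 : Matrix ι ι R).updateCol k a *ᵥ _ = _
    rw [mulVec_single_one]
    ext r
    simp [hlk, one_apply, Pi.single_apply]
  · change (1 : Matrix ι ι R).updateCol k a *ᵥ _ = _
    rw [mulVec_single_one]
    ext r
    simp

theorem transvection_mulVec [CommRing R] (i j : ι) (q : R) (a : ι → R) :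
    transvection i j q *ᵥ a = Function.update a i (a i + q * a j) := by
  ext l
  rcases eq_or_ne l i with rfl | hl <;> simp [transvection, add_mulVec, single_mulVec_eq, *]

theorem IsCompletableColumn.of_update_add_mul [CommRing R] {S : Set ι} {k i j : ι} {a : ι → R}
    (hi : i ∈ S) (hij : i ≠ j) (q : R)
    (h : IsCompletableColumn S k (Function.update a j (a j + q * a i))) :
    IsCompletableColumn S k a := by
  obtain ⟨U, hfix, hk⟩ := h
  refine ⟨(SpecialLinearGroup.transvection hij.symm (-q)).toGL * U, fun l hl => ?_, ?_⟩
  · have hli : i ≠ l := fun hli => hl (hli ▸ hi)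
    rw [Units.val_mul, ← mulVec_mulVec, hfix l hl]
    change transvection j i (-q) *ᵥ _ = _
    simp [transvection_mulVec, hli, -mulVec_single]
  · rw [Units.val_mul, ← mulVec_mulVec, hk]
    change transvection j i (-q) *ᵥ _ = _
    simp [transvection_mulVec, hij]

theorem IsPrimitiveOn.isCompletableColumn [EuclideanDomain R] {S : Set ι} {k : ι} {a : ι → R}
    (h : IsPrimitiveOn S a) (hk : k ∈ S) : IsCompletableColumn S k a := by
  obtain ⟨i, hi, hi0⟩ := h.exists_ne_zero
  -- Shrink a nonzero entry by Euclidean division until it divides all the others, so is a unit.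
  induction hp : a i using (EuclideanDomain.r_wellFounded (R := R)).induction
    generalizing a i with | _ p ih
  subst hp
  by_cases hdvd : ∀ j ∈ S, a i ∣ a j
  · have hunit : IsUnit (a i) := h _ hdvd
    rcases eq_or_ne i k with rfl | hik
    · exact isCompletableColumn_of_isUnit_apply hk hunit
    · obtain ⟨q, hq⟩ := hunit.dvd (a := 1 - a k)
      refine .of_update_add_mul hi hik q (isCompletableColumn_of_isUnit_apply hk ?_)
      simp [mul_comm q, ← hq]
  · push Not at hdvd
    obtain ⟨j, hj, hndvd⟩ := hdvd
    have hij : i ≠ j := fun hij => hndvd (hij ▸ dvd_rfl)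
    have hmod : a j + -(a j / a i) * a i = a j % a i := by
      rw [EuclideanDomain.mod_eq_sub_mul_div]; ring
    have hmod0 : a j % a i ≠ 0 := mt EuclideanDomain.mod_eq_zero.1 hndvd
    refine .of_update_add_mul hi hij (-(a j / a i))
      (ih _ ?_ (h.update_add_mul hi hij _) j hj ?_ rfl)
    · rw [Function.update_self, hmod]
      exact EuclideanDomain.mod_lt (a j) hi0
    · rwa [Function.update_self, hmod]

end ColumnCompletion

section IntegralForm

variable {ι R : Type*} [Fintype ι] [CommRing R]

/-- The bilinear form `x Y ᵗy` of `Y`, restricted to integer vectors. -/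
def integralForm (Y : Matrix ι ι R) (x y : ι → ℤ) : R :=
  (fun i => (x i : R)) ⬝ᵥ Y *ᵥ fun i => (y i : R)

/-- The congruence transform `ᵗU Y U` of `Y`, its form read in the basis of columns of `U`. -/
def integralCongruence (Y : Matrix ι ι R) (U : Matrix ι ι ℤ) : Matrix ι ι R :=
  (U.map Int.cast)ᵀ * Y * U.map Int.cast

theorem integralForm_neg_left (Y : Matrix ι ι R) (x y : ι → ℤ) :
    integralForm Y (-x) y = -integralForm Y x y := by
  simp [integralForm, dotProduct]

theorem integralForm_neg_right (Y : Matrix ι ι R) (x y : ι → ℤ) :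
    integralForm Y x (-y) = -integralForm Y x y := by
  simp [integralForm, dotProduct, mulVec]

theorem integralForm_single [DecidableEq ι] (Y : Matrix ι ι R) (i j : ι) :
    integralForm Y (Pi.single i 1) (Pi.single j 1) = Y i j := by
  have cast_single (k : ι) : (fun l => ((Pi.single k 1 : ι → ℤ) l : R)) = Pi.single k 1 := by
    ext l
    simp [Pi.single_apply]
  simp [integralForm, cast_single]

theorem integralForm_integralCongruence (Y : Matrix ι ι R) (U : Matrix ι ι ℤ) (x y : ι → ℤ) :
    integralForm (integralCongruence Y U) x y = integralForm Y (U *ᵥ x) (U *ᵥ y) := by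
  have cast_mulVec (z : ι → ℤ) :
      (fun i => ((U *ᵥ z) i : R)) = U.map Int.cast *ᵥ fun i => (z i : R) :=
    funext (RingHom.map_mulVec (Int.castRingHom R) U z)
  simp only [integralForm, integralCongruence, cast_mulVec, ← mulVec_mulVec, dotProduct_mulVec,
    vecMul_transpose]

theorem integralCongruence_apply [DecidableEq ι] (Y : Matrix ι ι R) (U : Matrix ι ι ℤ) (i j : ι) :
    integralCongruence Y U i j =
      integralForm Y (U *ᵥ Pi.single i 1) (U *ᵥ Pi.single j 1) := by
  rw [← integralForm_integralCongruence, integralForm_single]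

theorem integralCongruence_inv [DecidableEq ι] (Y : Matrix ι ι R) (U : GL ι ℤ) :
    integralCongruence (integralCongruence Y U) (U⁻¹ : GL ι ℤ) = Y := by
  have map_mul_map_inv : (U.1.map Int.cast * (U⁻¹).1.map Int.cast : Matrix ι ι R) = 1 :=
    congrArg Units.val (GeneralLinearGroup.map_mul_map_inv (Int.castRingHom R) U)
  calc integralCongruence (integralCongruence Y U) (U⁻¹ : GL ι ℤ)
      = (U.1.map Int.cast * (U⁻¹).1.map Int.cast : Matrix ι ι R)ᵀ * Y *
          (U.1.map Int.cast * (U⁻¹).1.map Int.cast) := by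
        simp only [integralCongruence, transpose_mul, Matrix.mul_assoc]
    _ = Y := by rw [map_mul_map_inv, transpose_one, Matrix.one_mul, Matrix.mul_one]

theorem posDef_integralCongruence [DecidableEq ι] {Y : Matrix ι ι ℝ} (hY : Y.PosDef)
    (U : GL ι ℤ) : (integralCongruence Y U).PosDef :=
  hY.conjTranspose_mul_mul_same <| mulVec_injective_of_isUnit
    (GeneralLinearGroup.map (Int.castRingHom ℝ) U).isUnit

end IntegralForm

section WellFoundedness

open Filter

theorem tendsto_intCast_pi_cofinite_cocompact {ι : Type*} [Finite ι] :
    Tendsto (fun (x : ι → ℤ) i => (x i : ℝ)) cofinite (cocompact (ι → ℝ)) := by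
  simpa only [coprodᵢ_cofinite, coprodᵢ_cocompact] using!
    Tendsto.pi_map_coprodᵢ fun _ : ι => Int.tendsto_coe_cofinite

variable {ι : Type*} [Fintype ι] {Y : Matrix ι ι ℝ}

open scoped MatrixOrder Matrix.Norms.L2Operator in
theorem tendsto_dotProduct_mulVec_cocompact_atTop (hY : Y.PosDef) :
    Tendsto (fun v => v ⬝ᵥ Y *ᵥ v) (cocompact (ι → ℝ)) atTop := by
  classical
  obtain ⟨B, hB, rfl⟩ :=
    CStarAlgebra.isStrictlyPositive_iff_eq_star_mul_self.1 hY.isStrictlyPositive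
  let f : (ι → ℝ) →ₗ[ℝ] EuclideanSpace ℝ ι :=
    (WithLp.linearEquiv 2 ℝ (ι → ℝ)).symm.toLinearMap ∘ₗ B.mulVecLin
  have f_injective : Function.Injective f :=
    (WithLp.linearEquiv 2 ℝ (ι → ℝ)).symm.injective.comp (mulVec_injective_of_isUnit hB)
  have norm_sq_f (v : ι → ℝ) : ‖f v‖ ^ 2 = v ⬝ᵥ (star B * B) *ᵥ v := by
    rw [← mulVec_mulVec, dotProduct_mulVec, star_eq_conjTranspose,
      conjTranspose_eq_transpose_of_trivial, vecMul_transpose, EuclideanSpace.real_norm_sq_eq]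
    simp [f, dotProduct, sq]
  simp only [← norm_sq_f]
  exact (tendsto_pow_atTop two_ne_zero).comp <| tendsto_norm_cocompact_atTop.comp
    (f.isClosedEmbedding_of_injective (LinearMap.ker_eq_bot.2 f_injective)).tendsto_cocompact

theorem finite_setOf_integralForm_le (hY : Y.PosDef) (c : ℝ) :
    {x : ι → ℤ | integralForm Y x x ≤ c}.Finite := by
  have h := ((tendsto_dotProduct_mulVec_cocompact_atTop hY).comp
    tendsto_intCast_pi_cofinite_cocompact).eventually_gt_atTop c
  simpa [eventually_cofinite] using! h

theorem wellFoundedLT_range_of_finite_setOf_le {α β : Type*} [Preorder β] {f : α → β}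
    (h : ∀ c, {x | f x ≤ c}.Finite) : WellFoundedLT (Set.range f) := by
  refine StrictMono.wellFoundedLT (f := fun c : Set.range f => {x | f x < c}.ncard) ?_
  rintro ⟨_, x, rfl⟩ ⟨_, y, rfl⟩ (hxy : f x < f y)
  have hssub : {z | f z < f x} ⊂ {z | f z < f y} :=
    ⟨fun _ hz => hz.trans hxy, fun hsub => lt_irrefl _ (hsub hxy)⟩
  exact Set.ncard_lt_ncard hssub ((h (f y)).subset fun _ hz => hz.le)

end WellFoundedness

section LexicographicMinimum

variable {ι : Type*} [Fintype ι] [LinearOrder ι] {Y : Matrix ι ι ℝ}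

/-- The `k`-th entry of the tuple that is minimised lexicographically over `U ∈ GL(ι,ℤ)`. For
`R = ᵗU Y U` it records `R k k` and, as a tie-break, whether `R j k < 0` for the predecessor `j`
of `k`. -/
def reductionKey (Y : Matrix ι ι ℝ) (U : GL ι ℤ) (k : ι) :
    Set.range (fun x => integralForm Y x x) ×ₗ Prop :=
  toLex (⟨_, U.1 *ᵥ Pi.single k 1, rfl⟩,
    ∃ j, j ⋖ k ∧ integralForm Y (U.1 *ᵥ Pi.single j 1) (U.1 *ᵥ Pi.single k 1) < 0)

/-- `U` minimises `reductionKey Y` lexicographically over `GL(ι,ℤ)`. -/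
def IsLexMinimal (Y : Matrix ι ι ℝ) (U : GL ι ℤ) : Prop :=
  ∀ V, ¬ toLex (reductionKey Y V) < toLex (reductionKey Y U)

theorem exists_isLexMinimal (hY : Y.PosDef) : ∃ U : GL ι ℤ, IsLexMinimal Y U := by
  have := wellFoundedLT_range_of_finite_setOf_le (finite_setOf_integralForm_le hY)
  exact ⟨_, Function.not_lt_argmin fun U => toLex (reductionKey Y U)⟩

theorem reductionKey_congr {U V : GL ι ℤ} {k : ι}
    (h : ∀ l ≤ k, V.1 *ᵥ Pi.single l 1 = U.1 *ᵥ Pi.single l 1) :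
    reductionKey Y V k = reductionKey Y U k := by
  have hpred : (∃ j, j ⋖ k ∧ integralForm Y (V.1 *ᵥ Pi.single j 1) (V.1 *ᵥ Pi.single k 1) < 0) ↔
      ∃ j, j ⋖ k ∧ integralForm Y (U.1 *ᵥ Pi.single j 1) (U.1 *ᵥ Pi.single k 1) < 0 :=
    exists_congr fun j => and_congr_right fun hj => by rw [h j hj.le, h k le_rfl]
  exact congrArg toLex (Prod.ext (Subtype.ext (by simp only [h k le_rfl])) (propext hpred))

theorem IsLexMinimal.not_reductionKey_lt {U V : GL ι ℤ} (hU : IsLexMinimal Y U) {k : ι}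
    (h : ∀ l < k, V.1 *ᵥ Pi.single l 1 = U.1 *ᵥ Pi.single l 1) :
    ¬ reductionKey Y V k < reductionKey Y U k :=
  fun hlt => hU V ⟨k, fun _ hl => reductionKey_congr fun _ hm => h _ (hm.trans_lt hl), hlt⟩

theorem exists_replace_column (U : GL ι ℤ) {k : ι} {a : ι → ℤ}
    (ha : IsPrimitiveOn (Set.Ici k) a) :
    ∃ V : GL ι ℤ, (∀ l < k, V.1 *ᵥ Pi.single l 1 = U.1 *ᵥ Pi.single l 1) ∧
      V.1 *ᵥ Pi.single k 1 = U.1 *ᵥ a := by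
  obtain ⟨C, hfix, hcol⟩ := ha.isCompletableColumn Set.self_mem_Ici
  refine ⟨U * C, fun l hl => ?_, ?_⟩
  · rw [Units.val_mul, ← mulVec_mulVec, hfix l (Set.notMem_Ici.2 hl)]
  · rw [Units.val_mul, ← mulVec_mulVec, hcol]

theorem IsLexMinimal.integralForm_column_le {U : GL ι ℤ} (hU : IsLexMinimal Y U) {k : ι}
    {a : ι → ℤ} (ha : IsPrimitiveOn (Set.Ici k) a) :
    integralForm Y (U.1 *ᵥ Pi.single k 1) (U.1 *ᵥ Pi.single k 1) ≤
      integralForm Y (U.1 *ᵥ a) (U.1 *ᵥ a) := by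
  by_contra! hlt
  obtain ⟨V, hfix, hcol⟩ := exists_replace_column U ha
  refine hU.not_reductionKey_lt hfix (Prod.Lex.toLex_lt_toLex.2 (.inl ?_))
  change integralForm Y (V.1 *ᵥ Pi.single k 1) (V.1 *ᵥ Pi.single k 1) <
    integralForm Y (U.1 *ᵥ Pi.single k 1) (U.1 *ᵥ Pi.single k 1)
  rwa [hcol]

theorem IsLexMinimal.integralForm_column_nonneg {U : GL ι ℤ} (hU : IsLexMinimal Y U) {j k : ι}
    (hjk : j ⋖ k) : 0 ≤ integralForm Y (U.1 *ᵥ Pi.single j 1) (U.1 *ᵥ Pi.single k 1) := by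
  by_contra! hneg
  have hprim : IsPrimitiveOn (Set.Ici k) (-Pi.single k 1 : ι → ℤ) := fun d hd =>
    isUnit_of_dvd_one (by simpa using hd k Set.self_mem_Ici)
  obtain ⟨V, hfix, hcol⟩ := exists_replace_column U hprim
  rw [mulVec_neg] at hcol
  refine hU.not_reductionKey_lt hfix (Prod.Lex.toLex_lt_toLex.2 (.inr ⟨?_, ?_⟩))
  · simp only [hcol, integralForm_neg_left, integralForm_neg_right, neg_neg]
  · have V_nonneg : ¬ ∃ i, i ⋖ k ∧
        integralForm Y (V.1 *ᵥ Pi.single i 1) (V.1 *ᵥ Pi.single k 1) < 0 := by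
      rintro ⟨i, hik, hi⟩
      rw [hik.unique_left hjk, hfix j hjk.lt, hcol, integralForm_neg_right] at hi
      linarith
    exact ⟨fun h => absurd h V_nonneg, fun h => V_nonneg (h ⟨j, hjk, hneg⟩)⟩

end LexicographicMinimum

theorem IsLexMinimal.minkowskiReduced {n : ℕ} {Y : Matrix (Fin n) (Fin n) ℝ} (hY : Y.PosDef)
    {U : GL (Fin n) ℤ} (hU : IsLexMinimal Y U) : MinkowskiReduced (integralCongruence Y U) := by
  refine ⟨posDef_integralCongruence hY U, fun k a ha => ?_, fun k hk => ?_⟩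
  · change _ ≤ integralForm (integralCongruence Y U) a a
    rw [integralCongruence_apply, integralForm_integralCongruence]
    exact hU.integralForm_column_le (Finset.coe_Ici k ▸ isPrimitiveOn_of_gcd_eq_one ha)
  · rw [integralCongruence_apply]
    exact hU.integralForm_column_nonneg (Fin.covBy_iff.2 (Order.covBy_add_one _))

/-- Minkowski reduction (property R1): every `Y ∈ 𝒫_n` can be written as `Y = ᵗA R A`
with `A ∈ GL(n,ℤ)` and `R ∈ ℜ_n` Minkowski reduced; equivalently `ᵗA⁻¹ Y A⁻¹ ∈ ℜ_n`. -/
theorem minkowski_reduction_R1 (n : ℕ)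
    (Y : Matrix (Fin n) (Fin n) ℝ) (hY : Y.PosDef) :
    ∃ (A : Matrix (Fin n) (Fin n) ℤ) (R : Matrix (Fin n) (Fin n) ℝ),
      (A.det = 1 ∨ A.det = -1) ∧ MinkowskiReduced R ∧
      Y = (A.map (Int.cast : ℤ → ℝ))ᵀ * R * A.map (Int.cast : ℤ → ℝ) := by
  obtain ⟨U, hU⟩ := exists_isLexMinimal hY
  exact ⟨(U⁻¹ : GL (Fin n) ℤ), integralCongruence Y U,
    Int.isUnit_iff.1 (GeneralLinearGroup.det U⁻¹).isUnit,
    hU.minkowskiReduced hY, (integralCongruence_inv Y U).symm⟩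
end
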